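/- arXiv:2002.08359 — 2 statements merged into one kernel-verified Lean document; each statement's English description precedes it below -/
import Mathlib

section
/- For every infinite set X ⊆ ℝ there exist a nowhere dense Lebesgue null set Y ⊆ ℝ, a strictly increasing bijection φ : X → Y which is a homeomorphism when X is totally disconnected, and a set S ⊆ ℝ of cardinality continuum such that the translates ξ + Y for ξ ∈ S form a partition of ℝ. -/
/-! The set `Y` is the image of `X` under an increasing jump function `f`, whose jumps have heights
`1 / n!` and sit at the points `d n` of a dense sequence. By the Cantor series argument behind the
irrationality of `e`, a bounded integer relation among the `1 / n!` is finite; since `d` is dense,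
this makes the values of `f` linearly independent over `ℤ`. The range of `f` is null as the heights
decay faster than `2⁻ⁿ`, and `f` is continuous off the `d n`, which can be chosen outside `X` when
`X` is totally disconnected.

An infinite independent set `Y` tiles the group `H` it generates: enumerate `H` in order type
`#Y` and cover its elements one by one. Covering `h` by `(h - y) +ᵥ Y` conflicts with an earlier
translate `s +ᵥ Y` only if `y` belongs to the finite support of `h - s`, so fewer than `#Y` choices
of `y` are excluded. Tiling every coset of `H` in the same way tiles `ℝ`. The elements `2 • y` lie
in pairwise distinct translates of `Y`, so there are at least `#Y` translates, hence `#ℝ`. -/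

section

open Set Filter Topology MeasureTheory
open scoped Pointwise Nat Cardinal

section Tiling

theorem exists_forall_image_Iio {ι α : Type*} [Preorder ι] [WellFoundedLT ι] [Nonempty α]
    {P : ι → Set α → α → Prop}
    (hP : ∀ i (f : ι → α), (∀ j < i, P j (f '' Iio j) (f j)) → ∃ a, P i (f '' Iio i) a) :
    ∃ f : ι → α, ∀ i, P i (f '' Iio i) (f i) := by
  let F (i : ι) (g : ∀ j, j < i → α) : α :=
    Classical.epsilon (P i (range fun j : Iio i ↦ g j j.2))
  let f : ι → α := (wellFounded_lt (α := ι)).fix F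
  have f_eq (i : ι) : f i = Classical.epsilon (P i (f '' Iio i)) := by
    rw [image_eq_range]
    exact WellFounded.fix_eq _ F i
  refine ⟨f, fun i ↦ ?_⟩
  induction i using WellFoundedLT.induction with
  | ind i ih => exact f_eq i ▸ Classical.epsilon_spec (hP i f ih)

theorem pairwise_image_of_forall_Iic {ι α : Type*} [LinearOrder ι] {f : ι → α} {r : α → α → Prop}
    {A : Set ι} (h : ∀ i ∈ A, (f '' Iic i).Pairwise r) : (f '' A).Pairwise r := by
  rintro _ ⟨i, hi, rfl⟩ _ ⟨j, hj, rfl⟩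
  rcases le_total i j with hij | hji
  · exact h j hj (mem_image_of_mem f hij) (mem_image_of_mem f self_mem_Iic)
  · exact h i hi (mem_image_of_mem f self_mem_Iic) (mem_image_of_mem f hji)

theorem isComplement_of_pairwiseDisjoint_vadd {G : Type*} [AddGroup G] {S T : Set G}
    (hdisj : S.PairwiseDisjoint (· +ᵥ T)) (hcov : ∀ g, ∃ s ∈ S, g ∈ s +ᵥ T) :
    AddSubgroup.IsComplement S T := by
  constructor
  · rintro ⟨⟨s, hs⟩, t, ht⟩ ⟨⟨s', hs'⟩, t', ht'⟩ (h : s + t = s' + t')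
    obtain rfl : s = s' := hdisj.elim_set hs hs' (s + t)
      (vadd_mem_vadd_set ht) (h ▸ vadd_mem_vadd_set ht')
    obtain rfl : t = t' := add_left_cancel h
    rfl
  · intro g
    obtain ⟨s, hs, t, ht, hst⟩ := hcov g
    exact ⟨(⟨s, hs⟩, ⟨t, ht⟩), hst⟩

theorem isComplement_add_image_val {G : Type*} [AddGroup G] {H : AddSubgroup G} {R : Set G}
    {S T : Set H} (hR : AddSubgroup.IsComplement R (H : Set G))
    (hST : AddSubgroup.IsComplement S T) :
    AddSubgroup.IsComplement (R + (↑) '' S) ((↑) '' T : Set G) := by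
  constructor
  · rintro ⟨⟨_, r, hr, _, ⟨s, hs, rfl⟩, rfl⟩, _, t, ht, rfl⟩
      ⟨⟨_, r', hr', _, ⟨s', hs', rfl⟩, rfl⟩, _, t', ht', rfl⟩ h
    have hrr' := @hR.1 (⟨r, hr⟩, s + t) (⟨r', hr'⟩, s' + t') (by simpa [add_assoc] using h)
    obtain rfl : r = r' := congrArg (fun p ↦ (p.1 : G)) hrr'
    have hss' := @hST.1 (⟨s, hs⟩, ⟨t, ht⟩) (⟨s', hs'⟩, ⟨t', ht'⟩) (congrArg Prod.snd hrr')
    obtain rfl : s = s' := congrArg (fun p ↦ (p.1 : H)) hss'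
    obtain rfl : t = t' := congrArg (fun p ↦ (p.2 : H)) hss'
    rfl
  · intro g
    obtain ⟨⟨⟨r, hr⟩, h⟩, rfl⟩ := hR.2 g
    obtain ⟨⟨⟨s, hs⟩, ⟨t, ht⟩⟩, rfl⟩ := hST.2 h
    exact ⟨(⟨r + s, add_mem_add hr (mem_image_of_mem _ hs)⟩, ⟨t, mem_image_of_mem _ ht⟩),
      add_assoc r _ _⟩

variable {G : Type*} [AddCommGroup G]

theorem exists_mem_vadd_and_pairwiseDisjoint_insert {Y T : Set G} (hY : Y.Infinite)
    (hfin : ∀ t ∉ Y, (Y ∩ (t +ᵥ (Y - Y))).Finite) (hT : T.PairwiseDisjoint (· +ᵥ Y))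
    (hTY : #T < #Y) (g : G) :
    ∃ x, g ∈ x +ᵥ Y ∧ (insert x T).PairwiseDisjoint (· +ᵥ Y) := by
  by_cases hcov : ∃ s ∈ T, g ∈ s +ᵥ Y
  · obtain ⟨s, hs, hgs⟩ := hcov
    exact ⟨s, hgs, by rwa [insert_eq_of_mem hs]⟩
  push Not at hcov
  obtain ⟨y, hy⟩ : ∃ y : Y, ∀ s : T, (y : G) ∉ (g - s) +ᵥ (Y - Y) := by
    by_contra! hbad
    choose σ hσ using hbad
    have := hY.to_subtype
    obtain ⟨s, hs⟩ := Cardinal.exists_infinite_fiber σ hTY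
    have hgs : g - s ∉ Y := fun h ↦ hcov s s.2 ⟨g - s, h, add_sub_cancel _ _⟩
    refine ((infinite_coe_iff.1 hs).image Subtype.val_injective.injOn) ((hfin _ hgs).subset ?_)
    rintro _ ⟨y, rfl, rfl⟩
    exact ⟨y.2, hσ y⟩
  refine ⟨g - y, ⟨y, y.2, sub_add_cancel _ _⟩, hT.insert fun s hs _ ↦ disjoint_left.2 ?_⟩
  rintro _ ⟨y₁, hy₁, rfl⟩ ⟨y₂, hy₂, h : s + y₂ = g - y + y₁⟩
  refine hy ⟨s, hs⟩ ⟨y₁ - y₂, sub_mem_sub hy₁ hy₂, ?_⟩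
  calc g - s + (y₁ - y₂) = g + y₁ - (s + y₂) := by abel
    _ = y := by rw [h]; abel

theorem exists_isComplement_of_finite_inter_vadd {Y : Set G} (hY : Y.Infinite) (hGY : #G ≤ #Y)
    (hfin : ∀ t ∉ Y, (Y ∩ (t +ᵥ (Y - Y))).Finite) :
    ∃ S : Set G, AddSubgroup.IsComplement S Y := by
  obtain ⟨_, _, hord⟩ := Cardinal.exists_ord_eq_type_lt G
  let P (g : G) (T : Set G) (x : G) : Prop :=
    g ∈ x +ᵥ Y ∧ (insert x T).PairwiseDisjoint (· +ᵥ Y)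
  obtain ⟨f, hf⟩ : ∃ f : G → G, ∀ g, P g (f '' Iio g) (f g) := by
    refine exists_forall_image_Iio fun g f ih ↦
      exists_mem_vadd_and_pairwiseDisjoint_insert hY hfin ?_ ?_ g
    · refine pairwise_image_of_forall_Iic fun j hj ↦ ?_
      rw [← Iio_insert, image_insert_eq]
      exact (ih j hj).2
    · exact Cardinal.mk_image_le.trans_lt ((Cardinal.mk_Iio_lt g hord).trans_le hGY)
  refine ⟨range f, isComplement_of_pairwiseDisjoint_vadd ?_ fun g ↦
    ⟨f g, mem_range_self g, (hf g).1⟩⟩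
  rw [← image_univ]
  refine pairwise_image_of_forall_Iic fun g _ ↦ ?_
  rw [← Iio_insert, image_insert_eq]
  exact (hf g).2

theorem mem_support_repr_of_add_sub_eq {ι : Type*} (b : Module.Basis ι ℤ G) {t : G}
    (ht : t ∉ range b) {i j k : ι} (h : b i + b j - b k = t) : i ∈ (b.repr t).support := by
  classical
  have hki : k ≠ i := by
    rintro rfl
    exact ht ⟨j, by rw [← h]; abel⟩
  rw [← h, Finsupp.mem_support_iff]
  simp only [map_sub, map_add, Module.Basis.repr_self, Finsupp.sub_apply, Finsupp.add_apply,
    Finsupp.single_apply, if_neg hki]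
  split_ifs <;> simp

theorem exists_isComplement_range_basis {ι : Type*} [Infinite ι] (b : Module.Basis ι ℤ G) :
    ∃ S : Set G, AddSubgroup.IsComplement S (range b) := by
  have hb : (range b).Infinite := infinite_range_of_injective b.injective
  refine exists_isComplement_of_finite_inter_vadd hb ?_ fun t ht ↦ ?_
  · have := hb.to_subtype
    rw [b.reindexRange.repr.toEquiv.cardinal_eq]
    simp
  · refine ((b.repr t).support.finite_toSet.image b).subset ?_
    rintro _ ⟨⟨i, rfl⟩, _, ⟨_, ⟨k, rfl⟩, _, ⟨j, rfl⟩, rfl⟩, h⟩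
    refine mem_image_of_mem b (mem_support_repr_of_add_sub_eq b ht (j := j) (k := k) ?_)
    rw [← show t + (b k - b j) = b i from h]
    abel

variable {ι : Type*} {v : ι → G}

theorem exists_isComplement_range_of_linearIndependent [Infinite ι] (hv : LinearIndependent ℤ v) :
    ∃ S : Set G, AddSubgroup.IsComplement S (range v) := by
  let H : AddSubgroup G := (Submodule.span ℤ (range v)).toAddSubgroup
  let b : Module.Basis ι ℤ H := Module.Basis.span hv
  have hbv : ((↑) '' range b : Set G) = range v := by
    rw [← range_comp]
    exact congrArg range (funext fun i ↦ congrArg Subtype.val (Module.Basis.span_apply hv i))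
  obtain ⟨T, hT⟩ := exists_isComplement_range_basis b
  obtain ⟨R, hR, -⟩ := H.exists_isComplement_left 0
  exact ⟨_, hbv ▸ isComplement_add_image_val hR hT⟩

theorem eq_of_two_nsmul_sub_eq_two_nsmul_sub (hv : LinearIndependent ℤ v) {i j k l : ι}
    (h : 2 • v i - v j = 2 • v k - v l) : i = k := by
  classical
  have hfinsupp : Finsupp.single i (2 : ℤ) - Finsupp.single j 1 =
      Finsupp.single k 2 - Finsupp.single l 1 := by
    apply hv
    simpa [two_smul] using h
  have hi := DFunLike.congr_fun hfinsupp i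
  simp only [Finsupp.sub_apply, Finsupp.single_apply] at hi
  grind

theorem mk_eq_of_isComplement_range [Infinite ι] (hv : LinearIndependent ℤ v) {S : Set G}
    (hS : AddSubgroup.IsComplement S (range v)) : #S = #G := by
  have hrange : ℵ₀ ≤ #(range v) :=
    Cardinal.infinite_iff.1 (infinite_range_of_injective hv.injective).to_subtype
  have hle : #(range v) ≤ #S := by
    have hdecomp (i : ι) : ∃ (s : S) (j : ι), s + v j = 2 • v i := by
      obtain ⟨⟨s, _, j, rfl⟩, hsj⟩ := hS.2 (2 • v i)
      exact ⟨s, j, hsj⟩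
    choose σ τ hστ using hdecomp
    have hσ : Function.Injective σ := fun i k hik ↦
      eq_of_two_nsmul_sub_eq_two_nsmul_sub hv (j := τ i) (l := τ k) (by
        rw [← hστ i, ← hστ k, add_sub_cancel_right, add_sub_cancel_right, hik])
    exact Cardinal.mk_le_of_injective
      (hσ.comp (Equiv.ofInjective v hv.injective).symm.injective)
  rw [← (Equiv.ofBijective _ hS).cardinal_eq, Cardinal.mk_prod, Cardinal.lift_id,
    Cardinal.lift_id, Cardinal.mul_eq_left (hrange.trans hle) hle
      (Cardinal.aleph0_pos.trans_le hrange).ne']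

end Tiling

section FactorialSeries

theorem hasSum_inv_factorial : HasSum (fun n : ℕ ↦ (n ! : ℝ)⁻¹) (Real.exp 1) := by
  simpa [Real.exp_eq_exp_ℝ] using NormedSpace.expSeries_div_hasSum_exp (1 : ℝ)

theorem summable_inv_factorial_add (N : ℕ) : Summable fun k ↦ ((k + N)! : ℝ)⁻¹ :=
  (summable_nat_add_iff N).2 hasSum_inv_factorial.summable

theorem tsum_inv_factorial_add_le (N : ℕ) : ∑' k, ((k + N)! : ℝ)⁻¹ ≤ Real.exp 1 / N ! := by
  rw [← hasSum_inv_factorial.tsum_eq, ← tsum_div_const]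
  refine (summable_inv_factorial_add N).tsum_le_tsum (fun k ↦ ?_)
    (hasSum_inv_factorial.summable.div_const _)
  rw [inv_eq_one_div, inv_eq_one_div, div_div]
  refine one_div_le_one_div_of_le (by positivity) ?_
  exact_mod_cast Nat.le_of_dvd (Nat.factorial_pos _)
    (Nat.factorial_mul_factorial_dvd_factorial_add k N)

theorem exists_int_eq_factorial_mul_sum (C : ℕ → ℤ) (N : ℕ) :
    ∃ z : ℤ, (N ! : ℝ) * ∑ n ∈ Finset.range (N + 1), C n * (n ! : ℝ)⁻¹ = z := by
  refine ⟨∑ n ∈ Finset.range (N + 1), C n * (N ! / n ! : ℕ), ?_⟩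
  rw [Int.cast_sum, Finset.mul_sum]
  refine Finset.sum_congr rfl fun n hn ↦ ?_
  have hdvd : n ! ∣ N ! := Nat.factorial_dvd_factorial (Finset.mem_range_succ_iff.1 hn)
  rw [Int.cast_mul, Int.cast_natCast, Nat.cast_div hdvd (by positivity)]
  ring

variable {C : ℕ → ℤ} {M : ℤ}

theorem norm_mul_inv_factorial_le (hM : ∀ n, |C n| ≤ M) (n : ℕ) :
    ‖(C n : ℝ) * (n ! : ℝ)⁻¹‖ ≤ M * (n ! : ℝ)⁻¹ := by
  rw [norm_mul, Real.norm_eq_abs, Real.norm_of_nonneg (by positivity)]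
  gcongr
  exact_mod_cast hM n

theorem abs_sum_range_mul_inv_factorial_le (hM : ∀ n, |C n| ≤ M)
    (hC : ∑' n, (C n : ℝ) * (n ! : ℝ)⁻¹ = 0) (N : ℕ) :
    |∑ n ∈ Finset.range N, C n * (n ! : ℝ)⁻¹| ≤ M * (Real.exp 1 / N !) := by
  have hsum : Summable fun n ↦ (C n : ℝ) * (n ! : ℝ)⁻¹ :=
    .of_norm_bounded (hasSum_inv_factorial.summable.mul_left _) (norm_mul_inv_factorial_le hM)
  have hM0 : (0 : ℝ) ≤ M := by exact_mod_cast (abs_nonneg _).trans (hM 0)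
  rw [eq_neg_of_add_eq_zero_left ((hsum.sum_add_tsum_nat_add N).trans hC), abs_neg]
  calc |∑' k, (C (k + N) : ℝ) * ((k + N)! : ℝ)⁻¹|
      ≤ ∑' k, M * ((k + N)! : ℝ)⁻¹ :=
        tsum_of_norm_bounded ((summable_inv_factorial_add N).mul_left _).hasSum
          fun k ↦ norm_mul_inv_factorial_le hM (k + N)
    _ = M * ∑' k, ((k + N)! : ℝ)⁻¹ := tsum_mul_left
    _ ≤ M * (Real.exp 1 / N !) := by gcongr; exact tsum_inv_factorial_add_le N

theorem sum_range_succ_mul_inv_factorial_eq_zero (hM : ∀ n, |C n| ≤ M)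
    (hC : ∑' n, (C n : ℝ) * (n ! : ℝ)⁻¹ = 0) {N : ℕ} (hN : M * Real.exp 1 < N + 1) :
    ∑ n ∈ Finset.range (N + 1), (C n : ℝ) * (n ! : ℝ)⁻¹ = 0 := by
  obtain ⟨z, hz⟩ := exists_int_eq_factorial_mul_sum C N
  have hz_lt : |(z : ℝ)| < 1 := by
    rw [← hz, abs_mul, Nat.abs_cast]
    calc (N ! : ℝ) * |∑ n ∈ Finset.range (N + 1), (C n : ℝ) * (n ! : ℝ)⁻¹|
        ≤ N ! * (M * (Real.exp 1 / (N + 1)!)) := by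
          gcongr
          exact abs_sum_range_mul_inv_factorial_le hM hC (N + 1)
      _ = M * Real.exp 1 / (N + 1) := by
          rw [Nat.factorial_succ]
          push_cast
          field_simp
      _ < 1 := (div_lt_one (by positivity)).2 hN
  have hz0 : z = 0 := Int.abs_lt_one_iff.1 (by exact_mod_cast hz_lt)
  rw [hz0, Int.cast_zero] at hz
  exact (mul_eq_zero.1 hz).resolve_left (by positivity)

theorem finite_setOf_ne_zero_of_tsum_mul_inv_factorial_eq_zero (hM : ∀ n, |C n| ≤ M)
    (hC : ∑' n, (C n : ℝ) * (n ! : ℝ)⁻¹ = 0) : {n | C n ≠ 0}.Finite := by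
  obtain ⟨K, hK⟩ := exists_nat_gt (M * Real.exp 1)
  refine (finite_Iic K).subset fun n hn ↦ ?_
  by_contra! hKn
  obtain ⟨m, rfl⟩ : ∃ m, n = m + 1 := ⟨n - 1, by grind⟩
  have hKm : (K : ℝ) ≤ m := by exact_mod_cast (by grind : K ≤ m)
  have hsum := sum_range_succ_mul_inv_factorial_eq_zero hM hC (N := m + 1)
    (by push_cast; linarith)
  rw [Finset.sum_range_succ, sum_range_succ_mul_inv_factorial_eq_zero hM hC (by linarith),
    zero_add] at hsum
  exact hn (by exact_mod_cast (mul_eq_zero.1 hsum).resolve_right (by positivity))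

theorem tendsto_two_pow_mul_tsum_inv_factorial_add :
    Tendsto (fun N : ℕ ↦ 2 ^ N * ∑' k, ((k + N)! : ℝ)⁻¹) atTop (𝓝 0) := by
  have hlim := (FloorSemiring.tendsto_pow_div_factorial_atTop (2 : ℝ)).const_mul (Real.exp 1)
  rw [mul_zero] at hlim
  refine squeeze_zero (fun N ↦ by positivity) (fun N ↦ ?_) hlim
  calc 2 ^ N * ∑' k, ((k + N)! : ℝ)⁻¹ ≤ 2 ^ N * (Real.exp 1 / N !) := by
        gcongr; exact tsum_inv_factorial_add_le N
    _ = Real.exp 1 * (2 ^ N / N !) := by ring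

end FactorialSeries

section Subseries

variable {w : ℕ → ℝ}

theorem tsum_indicator_mem_Icc (hw₀ : ∀ n, 0 ≤ w n) (hw : Summable w) (A : Set ℕ) (N : ℕ)
    [DecidablePred (· ∈ A)] :
    ∑' n, A.indicator w n ∈ Icc (∑ n ∈ Finset.range N with n ∈ A, w n)
      (∑ n ∈ Finset.range N with n ∈ A, w n + ∑' k, w (k + N)) := by
  have hsplit := (hw.indicator A).sum_add_tsum_nat_add N
  have htail_nonneg : 0 ≤ ∑' k, A.indicator w (k + N) :=
    tsum_nonneg fun k ↦ indicator_nonneg (fun n _ ↦ hw₀ n) _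
  have htail_le : ∑' k, A.indicator w (k + N) ≤ ∑' k, w (k + N) :=
    ((summable_nat_add_iff N).2 (hw.indicator A)).tsum_le_tsum
      (fun k ↦ indicator_le_self' (fun n _ ↦ hw₀ n) _) ((summable_nat_add_iff N).2 hw)
  rw [← hsplit]
  simp only [Finset.sum_filter, indicator_apply] at *
  constructor <;> linarith

theorem volume_closure_range_tsum_indicator_le (hw₀ : ∀ n, 0 ≤ w n) (hw : Summable w) (N : ℕ) :
    volume (closure (range fun A : Set ℕ ↦ ∑' n, A.indicator w n)) ≤
      ENNReal.ofReal (2 ^ N * ∑' k, w (k + N)) := by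
  classical
  let U : Set ℝ := ⋃ B ∈ (Finset.range N).powerset,
    Icc (∑ n ∈ B, w n) (∑ n ∈ B, w n + ∑' k, w (k + N))
  have hU : IsClosed U := (Finset.finite_toSet _).isClosed_biUnion fun _ _ ↦ isClosed_Icc
  have hsub : (range fun A : Set ℕ ↦ ∑' n, A.indicator w n) ⊆ U := by
    rintro _ ⟨A, rfl⟩
    exact mem_iUnion₂.2 ⟨{n ∈ Finset.range N | n ∈ A},
      Finset.mem_powerset.2 (Finset.filter_subset _ _), tsum_indicator_mem_Icc hw₀ hw A N⟩
  calc volume (closure (range fun A : Set ℕ ↦ ∑' n, A.indicator w n))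
      ≤ volume U := measure_mono (closure_minimal hsub hU)
    _ ≤ ∑ B ∈ (Finset.range N).powerset,
          volume (Icc (∑ n ∈ B, w n) (∑ n ∈ B, w n + ∑' k, w (k + N))) :=
        measure_biUnion_finset_le _ _
    _ = ENNReal.ofReal (2 ^ N * ∑' k, w (k + N)) := by
        simp [ENNReal.ofReal_mul, ENNReal.ofReal_pow]

theorem volume_closure_range_tsum_indicator_eq_zero (hw₀ : ∀ n, 0 ≤ w n) (hw : Summable w)
    (hlim : Tendsto (fun N ↦ 2 ^ N * ∑' k, w (k + N)) atTop (𝓝 0)) :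
    volume (closure (range fun A : Set ℕ ↦ ∑' n, A.indicator w n)) = 0 := by
  have hlim' : Tendsto (fun N ↦ ENNReal.ofReal (2 ^ N * ∑' k, w (k + N))) atTop (𝓝 0) := by
    simpa using ENNReal.tendsto_ofReal hlim
  exact nonpos_iff_eq_zero.1 (ge_of_tendsto' hlim' (volume_closure_range_tsum_indicator_le hw₀ hw))

end Subseries

/-- The increasing function with jumps `w i` at the points `d i`. The inequality `d i < x` is
strict, so that the function is left-continuous. -/
noncomputable def jumpSum {ι α : Type*} [LT α] (w : ι → ℝ) (d : ι → α) (x : α) : ℝ :=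
  ∑' i, {i | d i < x}.indicator w i

section JumpSum

variable {ι α : Type*} [LinearOrder α] {w : ι → ℝ} {d : ι → α}

theorem sum_zsmul_jumpSum (hw : Summable w) (s : Finset α) (g : α → ℤ) :
    ∑ j ∈ s, g j • jumpSum w d j = ∑' i, ((∑ j ∈ s with d i < j, g j : ℤ) : ℝ) * w i := by
  have hterm (i : ι) : ((∑ j ∈ s with d i < j, g j : ℤ) : ℝ) * w i =
      ∑ j ∈ s, (g j : ℝ) * {i | d i < j}.indicator w i := by
    simp [Finset.sum_filter, Finset.sum_mul, indicator_apply]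
  simp_rw [hterm]
  rw [Summable.tsum_finsetSum fun j _ ↦ (hw.indicator _).mul_left _]
  simp only [jumpSum, zsmul_eq_mul, tsum_mul_left]

variable [TopologicalSpace α] [OrderTopology α]

theorem strictMono_jumpSum [DenselyOrdered α] (hw₀ : ∀ i, 0 < w i) (hw : Summable w)
    (hd : DenseRange d) : StrictMono (jumpSum w d) := by
  intro x y hxy
  obtain ⟨i, hxi, hiy⟩ := hd.exists_mem_open isOpen_Ioo (nonempty_Ioo.2 hxy)
  refine Summable.tsum_lt_tsum (i := i)
    (indicator_le_indicator_of_subset (fun j (hj : d j < x) ↦ hj.trans hxy) fun j ↦ (hw₀ j).le)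
    ?_ (hw.indicator _) (hw.indicator _)
  simpa [hxi.not_gt, hiy] using hw₀ i

theorem continuousAt_jumpSum (hw₀ : ∀ i, 0 ≤ w i) (hw : Summable w) {x : α} (hx : ∀ i, d i ≠ x) :
    ContinuousAt (jumpSum w d) x := by
  refine tendsto_tsum_of_dominated_convergence hw (fun i ↦ ?_) (.of_forall fun y i ↦ ?_)
  · refine tendsto_const_nhds.congr' ?_
    rcases (hx i).lt_or_gt with h | h
    · filter_upwards [lt_mem_nhds h] with y hy
      simp [h, hy]
    · filter_upwards [gt_mem_nhds h] with y hy
      simp [h.not_gt, hy.not_gt]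
  · exact (norm_indicator_le_norm_self w i).trans_eq (Real.norm_of_nonneg (hw₀ i))

theorem eq_zero_of_forall_dense_sum_filter_lt_eq_zero [NoMinOrder α] [NoMaxOrder α]
    [DenselyOrdered α] {M : Type*} [AddCommGroup M] {D : Set α} (hD : Dense D) {s : Finset α}
    {g : α → M} (hg : ∀ y ∈ D, ∑ j ∈ s with y < j, g j = 0) {m : α} (hm : m ∈ s) : g m = 0 := by
  classical
  have hnhds : ((s.erase m : Finset α) : Set α)ᶜ ∈ 𝓝 m :=
    (s.erase m).finite_toSet.isClosed.isOpen_compl.mem_nhds (by simp)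
  obtain ⟨a, b, ⟨ham, hmb⟩, hab⟩ := mem_nhds_iff_exists_Ioo_subset.1 hnhds
  obtain ⟨y, hyD, hay, hym⟩ := hD.exists_between ham
  obtain ⟨z, hzD, hmz, hzb⟩ := hD.exists_between hmb
  have hfilter : {j ∈ s | y < j} = insert m {j ∈ s | z < j} := by
    ext j
    have hj (hjs : j ∈ s) (hjm : j ≠ m) (haj : a < j) : b ≤ j := by
      by_contra! hjb
      exact hab ⟨haj, hjb⟩ (by simp [hjs, hjm])
    simp only [Finset.mem_filter, Finset.mem_insert]
    grind
  have hsum := hg y hyD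
  rwa [hfilter, Finset.sum_insert (by simp [hmz.not_gt]), hg z hzD, add_zero] at hsum

theorem linearIndependent_jumpSum [NoMinOrder α] [NoMaxOrder α] [DenselyOrdered α]
    (hd : DenseRange d) (hw : Summable w)
    (hrel : ∀ (C : ι → ℤ) (M : ℤ), (∀ i, |C i| ≤ M) → ∑' i, (C i : ℝ) * w i = 0 →
      {i | C i ≠ 0}.Finite) :
    LinearIndependent ℤ (jumpSum w d) := by
  refine linearIndependent_iff'.2 fun s g hg m hm ↦ ?_
  let C (i : ι) : ℤ := ∑ j ∈ s with d i < j, g j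
  have hC_le (i : ι) : |C i| ≤ ∑ j ∈ s, |g j| :=
    (Finset.abs_sum_le_sum_abs _ _).trans
      (Finset.sum_le_sum_of_subset_of_nonneg (Finset.filter_subset _ _) fun _ _ _ ↦ abs_nonneg _)
  have hC_fin : {i | C i ≠ 0}.Finite := hrel C _ hC_le ((sum_zsmul_jumpSum hw s g).symm.trans hg)
  have (x : α) : (𝓝[≠] x).NeBot := (nhdsGT_neBot x).mono (nhdsGT_le_nhdsNE x)
  refine eq_zero_of_forall_dense_sum_filter_lt_eq_zero (hd.sdiff_finite (hC_fin.image d)) ?_ hm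
  rintro _ ⟨⟨i, rfl⟩, hi⟩
  by_contra hCi
  exact hi (mem_image_of_mem d hCi)

end JumpSum

section Topology

theorem isEmbedding_domRestrict_of_strictMono {α β : Type*} [LinearOrder α] [TopologicalSpace α]
    [OrderTopology α] [LinearOrder β] [TopologicalSpace β] [OrderTopology β] {f : α → β}
    (hf : StrictMono f) {s : Set α} (hs : ContinuousOn f s) : IsEmbedding (s.domRestrict f) := by
  refine ⟨⟨le_antisymm hs.domRestrict.le_induced ?_⟩, hf.injective.injOn.injective⟩
  calc TopologicalSpace.induced (s.domRestrict f) _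
      = .induced Subtype.val (.induced f _) := (induced_compose (f := Subtype.val) (g := f)).symm
    _ ≤ .induced Subtype.val (Preorder.topology α) :=
        induced_mono (induced_topology_le_preorder hf.lt_iff_lt)
    _ = instTopologicalSpaceSubtype := by rw [← OrderTopology.topology_eq_generate_intervals]; rfl

theorem dense_compl_of_isTotallyDisconnected {α : Type*} [TopologicalSpace α]
    [LocallyConnectedSpace α] [PerfectSpace α] {s : Set α} (hs : IsTotallyDisconnected s) :
    Dense sᶜ := by
  rw [← interior_eq_empty_iff_dense_compl, eq_empty_iff_forall_notMem]
  intro x hx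
  have hcomp : connectedComponentIn (interior s) x = {x} :=
    (hs _ ((connectedComponentIn_subset _ _).trans interior_subset)
      isPreconnected_connectedComponentIn).eq_singleton_of_mem (mem_connectedComponentIn hx)
  exact not_isOpen_singleton x (hcomp ▸ isOpen_interior.connectedComponentIn)

theorem exists_denseRange_forall_mem {α : Type*} [TopologicalSpace α] [Nonempty α]
    [SecondCountableTopology α] {s : Set α} (hs : Dense s) :
    ∃ d : ℕ → α, DenseRange d ∧ ∀ n, d n ∈ s := by
  have := hs.nonempty.to_subtype
  obtain ⟨u, hu⟩ := TopologicalSpace.exists_dense_seq s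
  exact ⟨fun n ↦ u n, hs.denseRange_val.comp hu continuous_subtype_val, fun n ↦ (u n).2⟩

end Topology

theorem exists_strictMono_linearIndependent (X : Set ℝ) :
    ∃ f : ℝ → ℝ, StrictMono f ∧ LinearIndependent ℤ f ∧ volume (closure (range f)) = 0 ∧
      (IsTotallyDisconnected X → ContinuousOn f X) := by
  have hdense : Dense {x | IsTotallyDisconnected X → x ∉ X} := by
    by_cases hX : IsTotallyDisconnected X
    · simpa [hX] using! dense_compl_of_isTotallyDisconnected hX
    · simp [hX]
  obtain ⟨d, hd, hdX⟩ := exists_denseRange_forall_mem hdense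
  have hpos (n : ℕ) : 0 < (n ! : ℝ)⁻¹ := by positivity
  have hsum := hasSum_inv_factorial.summable
  refine ⟨jumpSum (fun n : ℕ ↦ (n ! : ℝ)⁻¹) d, strictMono_jumpSum hpos hsum hd,
    linearIndependent_jumpSum hd hsum fun C M ↦
      finite_setOf_ne_zero_of_tsum_mul_inv_factorial_eq_zero, ?_, fun hX x hx ↦ ?_⟩
  · refine measure_mono_null (closure_mono ?_) (volume_closure_range_tsum_indicator_eq_zero
      (fun n ↦ (hpos n).le) hsum tendsto_two_pow_mul_tsum_inv_factorial_add)
    exact range_subset_iff.2 fun x ↦ mem_range_self {n | d n < x}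
  · exact (continuousAt_jumpSum (fun n ↦ (hpos n).le) hsum
      fun n hn ↦ hdX n hX (by rwa [hn])).continuousWithinAt

end

theorem partition_into_translates_of_copy (X : Set ℝ) (hX : X.Infinite) :
    ∃ (Y : Set ℝ) (φ : ℝ → ℝ) (S : Set ℝ),
      IsNowhereDense Y ∧ MeasureTheory.volume Y = 0 ∧
      StrictMonoOn φ X ∧ φ '' X = Y ∧
      (IsTotallyDisconnected X → ∃ h : ↥X ≃ₜ ↥Y, ∀ x : ↥X, (h x : ℝ) = φ x) ∧
      Cardinal.mk S = Cardinal.continuum ∧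
      S.PairwiseDisjoint (fun ξ => (fun y => ξ + y) '' Y) ∧
      (⋃ ξ ∈ S, (fun y => ξ + y) '' Y) = Set.univ := by
  obtain ⟨f, hf_mono, hf_indep, hf_null, hf_cont⟩ := exists_strictMono_linearIndependent X
  have hY_null : MeasureTheory.volume (closure (Set.range (X.domRestrict f))) = 0 :=
    MeasureTheory.measure_mono_null (closure_mono (Set.range_comp_subset_range _ f)) hf_null
  have hX_indep : LinearIndependent ℤ (X.domRestrict f) := hf_indep.comp _ Subtype.val_injective
  have := hX.to_subtype
  obtain ⟨S, hS⟩ := exists_isComplement_range_of_linearIndependent hX_indep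
  refine ⟨Set.range (X.domRestrict f), f, S,
    MeasureTheory.Measure.interior_eq_empty_of_null hY_null,
    MeasureTheory.measure_mono_null subset_closure hY_null, hf_mono.strictMonoOn X,
    (Set.range_domRestrict f X).symm, fun hX_disc ↦ ?_,
    (mk_eq_of_isComplement_range hX_indep hS).trans Cardinal.mk_real, hS.pairwiseDisjoint_vadd, ?_⟩
  · exact ⟨(isEmbedding_domRestrict_of_strictMono hf_mono (hf_cont hX_disc)).toHomeomorph,
      fun x ↦ rfl⟩
  · exact (Set.iUnion_vadd_set S (Set.range (X.domRestrict f))).trans hS.add_eq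
end

section
/- The Baire space ℝ \ ℚ can be partitioned into exactly κ pairwise homeomorphic Bernstein sets for every cardinal κ with 2 ≤ κ ≤ 2^ℵ₀. -/
/-- A Cantor set in a topological space: nonempty, compact, totally disconnected, perfect. -/
def IsCantorSet {P : Type*} [TopologicalSpace P] (C : Set P) : Prop :=
  C.Nonempty ∧ IsCompact C ∧ IsTotallyDisconnected C ∧ Perfect C

/-- A Bernstein set: no Cantor set is contained in it or in its complement. -/
def IsBernstein {P : Type*} [TopologicalSpace P] (B : Set P) : Prop :=
  ∀ C : Set P, IsCantorSet C → ¬C ⊆ B ∧ ¬C ⊆ Bᶜ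

/-! Let `V = ℕ → β` with `β = ℕ →₀ ℚ` discrete: a Polish topological vector space over `ℚ`. By the
Alexandrov–Urysohn theorem it is homeomorphic to the irrationals, since both are Polish, have a
clopen basis and contain no nonempty open set with compact closure. Let `T` be an abelian group with
`κ` elements. Since spans of fewer than `𝔠` vectors have fewer than `𝔠` elements, while each of the
at most `𝔠` nonempty perfect sets has `𝔠`, a transfinite recursion yields a linearly independent
family with one vector in `C` for each pair of a nonempty perfect set `C ⊆ V` and a target
`w : T →₀ ℚ`; sending it to `w` defines a linear map `f : V → (T →₀ ℚ)` that takes every nonempty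
perfect set onto `T →₀ ℚ`. Composing with `q x = ∑ t, ⌊x t⌋ • t`, which satisfies
`q (x + single t 1) = q x + t`, gives a map `V → T` whose fibres meet every nonempty perfect set and
are permuted transitively by the translations of `V`. -/

open Set Cardinal Function Topology TopologicalSpace

universe u v

section LinearAlgebra

lemma mk_finsupp_le_max_aleph0 (α : Type u) (R : Type v) [Zero R] [Countable R] :
    #(α →₀ R) ≤ max (lift.{v} #α) ℵ₀ := by
  rcases finite_or_infinite α with _ | _
  · exact mk_le_aleph0.trans (le_max_right _ _)
  rcases subsingleton_or_nontrivial R with _ | _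
  · exact mk_le_aleph0.trans (le_max_right _ _)
  · rw [mk_finsupp_lift_of_infinite]
    exact max_le_max le_rfl (by simp)

lemma mk_span_le_max_aleph0 {R : Type v} {M : Type u} [Semiring R] [Countable R] [AddCommMonoid M]
    [Module R M] (s : Set M) : #(Submodule.span R s) ≤ max #s ℵ₀ := by
  have hspan : (Submodule.span R s : Set M) =
      range (Finsupp.linearCombination R ((↑) : s → M)) := by
    rw [← LinearMap.coe_range, Finsupp.range_linearCombination, Subtype.range_coe]
  have hrange := mk_range_le_lift (f := Finsupp.linearCombination R ((↑) : s → M))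
  rw [← hspan, lift_umax, lift_id'.{u, max u v}] at hrange
  rw [← lift_le.{v}, lift_max, lift_aleph0]
  exact hrange.trans (mk_finsupp_le_max_aleph0 s R)

variable {K : Type*} [DivisionRing K]

lemma linearIndependent_of_notMem_span_Iio {ι V : Type*} [LinearOrder ι] [AddCommGroup V]
    [Module K V] {x : ι → V} (hx : ∀ i, x i ∉ Submodule.span K (x '' Iio i)) :
    LinearIndependent K x := by
  rw [← linearIndepOn_univ_iff]
  refine linearIndepOn_of_finite _ fun t _ ht => ?_
  lift t to Finset ι using ht
  induction t using Finset.induction_on_max with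
  | empty => simp
  | insert a s hlt ih =>
    rw [Finset.coe_insert, linearIndepOn_insert fun ha => (hlt a ha).false]
    exact ⟨ih (subset_univ _), fun ha => hx a (Submodule.span_mono (image_mono hlt) ha)⟩

lemma exists_linearIndependent_forall_mem {ι V : Type u} [Countable K] [AddCommGroup V]
    [Module K V] {c : Cardinal.{u}} (hc : ℵ₀ < c) (hι : #ι ≤ c) (C : ι → Set V)
    (hC : ∀ i, c ≤ #(C i)) : ∃ x : ι → V, LinearIndependent K x ∧ ∀ i, x i ∈ C i := by
  obtain ⟨_, _, hord⟩ := exists_ord_eq_type_lt ι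
  have hfresh (i : ι) (s : Iio i → V) : ∃ y ∈ C i, y ∉ Submodule.span K (range s) := by
    by_contra! hsub
    refine ((hC i).trans (mk_le_mk_of_subset hsub)).not_gt ?_
    calc #(Submodule.span K (range s)) ≤ max #(range s) ℵ₀ := mk_span_le_max_aleph0 _
      _ < c := max_lt ((mk_range_le.trans_lt (mk_Iio_lt i hord)).trans_le hι) hc
  choose next next_mem next_notMem using hfresh
  let x : ι → V := WellFoundedLT.fix fun i ih => next i fun j => ih j j.2
  have hx (i : ι) : x i = next i fun j => x j := WellFoundedLT.fix_eq _ i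
  refine ⟨x, linearIndependent_of_notMem_span_Iio fun i => ?_, fun i => hx i ▸ next_mem _ _⟩
  rw [hx, image_eq_range]
  exact next_notMem i _

lemma exists_linearMap_forall_apply_eq {ι V W : Type*} [AddCommGroup V] [Module K V]
    [AddCommGroup W] [Module K W] {x : ι → V} (hx : LinearIndependent K x) (w : ι → W) :
    ∃ f : V →ₗ[K] W, ∀ i, f (x i) = w i := by
  obtain ⟨g, hg⟩ := LinearMap.exists_leftInverse_of_injective _ (LinearMap.ker_eq_bot.2 hx)
  refine ⟨Finsupp.linearCombination K w ∘ₗ g, fun i => ?_⟩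
  have hgx : g (x i) = Finsupp.single i 1 := by
    simpa using LinearMap.congr_fun hg (Finsupp.single i 1)
  simp [hgx]

lemma exists_linearMap_forall_image_eq_univ {V W : Type u} [Countable K] [AddCommGroup V]
    [Module K V] [AddCommGroup W] [Module K W] {c : Cardinal.{u}} (hc : ℵ₀ < c) (hW : #W ≤ c)
    {S : Set (Set V)} (hS : #S ≤ c) (hSc : ∀ C ∈ S, c ≤ #C) :
    ∃ f : V →ₗ[K] W, ∀ C ∈ S, f '' C = Set.univ := by
  have hSW : #(S × W) ≤ c := by
    rw [mk_prod, lift_id, lift_id]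
    exact mul_le_of_le hc.le hS hW
  obtain ⟨x, hx, hxmem⟩ := exists_linearIndependent_forall_mem (K := K) hc hSW
    (fun i => (i.1 : Set V)) fun i => hSc _ i.1.2
  obtain ⟨f, hf⟩ := exists_linearMap_forall_apply_eq hx Prod.snd
  exact ⟨f, fun C hC => eq_univ_of_forall fun w => ⟨x (⟨C, hC⟩, w), hxmem (⟨C, hC⟩, w), hf _⟩⟩

lemma exists_finsupp_rat_add_single_eq_add (T : Type*) [AddCommGroup T] :
    ∃ q : (T →₀ ℚ) → T, ∀ x t, q (x + Finsupp.single t 1) = q x + t := by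
  refine ⟨fun x => Finsupp.linearCombination ℤ id (x.mapRange Int.floor Int.floor_zero),
    fun x t => ?_⟩
  have hfloor : (x + Finsupp.single t 1).mapRange Int.floor Int.floor_zero =
      x.mapRange Int.floor Int.floor_zero + Finsupp.single t 1 := by
    ext s
    rcases eq_or_ne t s with rfl | hts
    · simp
    · simp [Finsupp.single_eq_of_ne' hts]
  simp [hfloor]

end LinearAlgebra

section Cardinality

lemma mk_setOf_isClosed_le_continuum (X : Type u) [TopologicalSpace X] [SecondCountableTopology X] :
    #{C : Set X | IsClosed C} ≤ 𝔠 := by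
  let complSUnion (S : Set (countableBasis X)) : {C : Set X | IsClosed C} :=
    ⟨(⋃₀ (Subtype.val '' S))ᶜ, (isOpen_sUnion <| by
      rintro _ ⟨U, -, rfl⟩
      exact isOpen_of_mem_countableBasis U.2).isClosed_compl⟩
  have hsurj : Surjective complSUnion := by
    rintro ⟨C, hC⟩
    obtain ⟨S, hS, hCS⟩ := (isBasis_countableBasis X).open_eq_sUnion hC.isOpen_compl
    refine ⟨Subtype.val ⁻¹' S, Subtype.ext ?_⟩
    simp only [complSUnion]
    rw [Subtype.image_preimage_coe, inter_eq_self_of_subset_right hS, ← hCS, compl_compl]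
  calc #{C : Set X | IsClosed C} ≤ #(Set (countableBasis X)) := mk_le_of_surjective hsurj
    _ = 2 ^ #(countableBasis X) := mk_set
    _ ≤ 2 ^ ℵ₀ := power_le_power_left two_ne_zero mk_le_aleph0
    _ = 𝔠 := two_power_aleph0

lemma continuum_le_mk_of_perfect {X : Type u} [TopologicalSpace X] [PolishSpace X] {C : Set X}
    (hC : Perfect C) (hne : C.Nonempty) : 𝔠 ≤ #C := by
  let := upgradeIsCompletelyMetrizable X
  obtain ⟨f, hfC, -, hf⟩ := hC.exists_nat_bool_injection hne
  have h := lift_mk_le_lift_mk_of_injective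
    (f := codRestrict f C fun x => hfC (mem_range_self x)) (hf.codRestrict _)
  simpa using h

end Cardinality

section Bernstein

lemma isBernstein_fiber {X T : Type*} [TopologicalSpace X] [Nontrivial T] {g : X → T}
    (hg : ∀ C, IsCantorSet C → g '' C = Set.univ) (t : T) : IsBernstein (g ⁻¹' {t}) := by
  refine fun C hC => ⟨fun hsub => ?_, fun hsub => ?_⟩
  · obtain ⟨s, hst⟩ := exists_ne t
    obtain ⟨x, hxC, rfl⟩ := (hg C hC).symm ▸ mem_univ s
    exact hst (hsub hxC)
  · obtain ⟨x, hxC, rfl⟩ := (hg C hC).symm ▸ mem_univ t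
    exact hsub hxC rfl

lemma nonempty_homeomorph_fiber {X T : Type*} [TopologicalSpace X] [AddCommGroup T] {g : X → T}
    (hg : ∀ t, ∃ h : X ≃ₜ X, ∀ x, g (h x) = g x + t) (s t : T) :
    Nonempty (g ⁻¹' {s} ≃ₜ g ⁻¹' {t}) := by
  obtain ⟨h, hh⟩ := hg (t - s)
  refine ⟨h.sets ?_⟩
  ext x
  simp only [mem_preimage, mem_singleton_iff, hh]
  rw [← eq_sub_iff_add_eq, sub_sub_cancel]

lemma exists_linearMap_forall_perfect_image_eq_univ {K : Type*} {X V W : Type u} [DivisionRing K]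
    [Countable K] [TopologicalSpace X] [PolishSpace X] [AddCommGroup V] [Module K V]
    [AddCommGroup W] [Module K W] (e : X ≃ V) (hW : #W ≤ 𝔠) :
    ∃ f : V →ₗ[K] W, ∀ C : Set X, Perfect C → C.Nonempty → f '' (e '' C) = Set.univ := by
  let S : Set (Set V) := image e '' {C | Perfect C ∧ C.Nonempty}
  have hS : #S ≤ 𝔠 := mk_image_le.trans <|
    (mk_le_mk_of_subset fun C hC => hC.1.closed).trans (mk_setOf_isClosed_le_continuum X)
  have hSc : ∀ C ∈ S, 𝔠 ≤ #C := by
    rintro _ ⟨C, ⟨hC, hne⟩, rfl⟩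
    exact (continuum_le_mk_of_perfect hC hne).trans_eq (mk_image_eq e.injective).symm
  obtain ⟨f, hf⟩ := exists_linearMap_forall_image_eq_univ (K := K) aleph0_lt_continuum hW hS hSc
  exact ⟨f, fun C hC hne => hf _ ⟨C, ⟨hC, hne⟩, rfl⟩⟩

lemma exists_equivariant_map_forall_perfect_image_eq_univ {X V T : Type u}
    [TopologicalSpace X] [PolishSpace X] [Uncountable X] [TopologicalSpace V] [AddCommGroup V]
    [SeparatelyContinuousAdd V] [Module ℚ V] (e : X ≃ₜ V) [AddCommGroup T] (hT : #T ≤ 𝔠) :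
    ∃ g : X → T, (∀ C, Perfect C → C.Nonempty → g '' C = Set.univ) ∧
      ∀ t, ∃ h : X ≃ₜ X, ∀ x, g (h x) = g x + t := by
  have hW : #(T →₀ ℚ) ≤ 𝔠 := (mk_finsupp_le_max_aleph0 T ℚ).trans <|
    max_le (by simpa using hT) aleph0_le_continuum
  obtain ⟨f, hf⟩ := exists_linearMap_forall_perfect_image_eq_univ (K := ℚ) e.toEquiv hW
  obtain ⟨q, hq⟩ := exists_finsupp_rat_add_single_eq_add T
  have hq_surj : Surjective q := fun t =>
    ⟨0 + Finsupp.single (t - q 0) 1, (hq _ _).trans (add_sub_cancel _ _)⟩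
  have hf_surj : Surjective f := fun w => by
    obtain ⟨C, hC, hne, -⟩ := exists_perfect_nonempty_of_isClosed_of_not_countable
      (isClosed_univ (X := X)) not_countable_univ
    obtain ⟨v, -, hv⟩ := (hf C hC hne).symm ▸ mem_univ w
    exact ⟨v, hv⟩
  refine ⟨fun x => q (f (e x)), fun C hC hne => ?_, fun t => ?_⟩
  · calc (fun x => q (f (e x))) '' C = q '' (f '' (e '' C)) := by simp only [image_image]
      _ = q '' Set.univ := congr_arg _ (hf C hC hne)
      _ = Set.univ := image_univ_of_surjective hq_surj
  · obtain ⟨w, hw⟩ := hf_surj (Finsupp.single t 1)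
    exact ⟨(e.trans (Homeomorph.addRight w)).trans e.symm, fun x => by simp [hw, hq]⟩

end Bernstein

section BaireCharacterization

open Metric Filter PiNat
open scoped ENNReal

variable {X β : Type*}

lemma exists_pairwise_disjoint_isClopen_subset_eball [PseudoEMetricSpace X]
    [SecondCountableTopology X] [Nonempty X] (hX : IsTopologicalBasis {U : Set X | IsClopen U})
    {ε : ℝ≥0∞} (hε : 0 < ε) :
    ∃ Q : ℕ → Set X, (∀ n, IsClopen (Q n)) ∧ Pairwise (Disjoint on Q) ∧ ⋃ n, Q n = Set.univ ∧
      ∀ n, ∃ x, Q n ⊆ eball x ε := by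
  choose U hU hxU hUball using fun x : X => hX.mem_nhds_iff.1 (eball_mem_nhds x hε)
  obtain ⟨s, hs, hsU⟩ := TopologicalSpace.countable_cover_nhds fun x =>
    (hU x).isOpen.mem_nhds (hxU x)
  have hsne : s.Nonempty := by
    by_contra! hempty
    simp [hempty, empty_ne_univ] at hsU
  obtain ⟨c, rfl⟩ := hs.exists_eq_range hsne
  rw [biUnion_range] at hsU
  exact ⟨disjointed (U ∘ c), fun n => disjointedRec (fun _ _ h => h.diff (hU _)) (hU _),
    disjoint_disjointed _, iUnion_disjointed.trans hsU,
    fun n => ⟨c n, (disjointed_subset _ n).trans (hUball _)⟩⟩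

lemma exists_isClopen_partition_subset_eball [PseudoEMetricSpace X] [CompleteSpace X]
    [SecondCountableTopology X] [Countable β] [Infinite β]
    (hX : IsTopologicalBasis {U : Set X | IsClopen U}) {U : Set X} (hU : IsClopen U)
    (hUc : ¬IsCompact U) {ε : ℝ≥0∞} (hε : 0 < ε) :
    ∃ P : β → Set X, (∀ b, IsClopen (P b)) ∧ (∀ b, (P b).Nonempty) ∧
      (∀ b, ∃ x, P b ⊆ eball x ε) ∧ Pairwise (Disjoint on P) ∧ ⋃ b, P b = U := by
  have hU_bdd : ¬TotallyBounded U := fun h =>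
    hUc (isCompact_iff_totallyBounded_isComplete.2 ⟨h, hU.isClosed.isComplete⟩)
  obtain ⟨δ, hδ, hδU⟩ : ∃ δ > 0, ∀ t : Set X, t.Finite → ¬U ⊆ ⋃ y ∈ t, eball y δ := by
    simpa [EMetric.totallyBounded_iff] using hU_bdd
  have : Nonempty X := by
    by_contra! hempty
    exact hUc (eq_empty_of_isEmpty U ▸ isCompact_empty)
  obtain ⟨Q, hQ, hQdisj, hQunion, hQball⟩ :=
    exists_pairwise_disjoint_isClopen_subset_eball hX (lt_min hε hδ)
  choose c hc using hQball
  let J : Set ℕ := {n | (U ∩ Q n).Nonempty}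
  have hJ_cover : ⋃ n : J, U ∩ Q n = U := by
    refine Subset.antisymm (iUnion_subset fun _ => inter_subset_left) fun x hx => ?_
    obtain ⟨n, hn⟩ := mem_iUnion.1 (hQunion ▸ mem_univ x)
    exact mem_iUnion.2 ⟨⟨n, x, hx, hn⟩, hx, hn⟩
  have hJ_inf : J.Infinite := fun hJ => hδU (c '' J) (hJ.image c) <| by
    rw [biUnion_image, biUnion_eq_iUnion]
    exact hJ_cover.superset.trans <| iUnion_mono fun n =>
      inter_subset_right.trans <| (hc n).trans <| eball_subset_eball (min_le_right _ _)
  have := hJ_inf.to_subtype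
  obtain ⟨σ⟩ : Nonempty (β ≃ J) := nonempty_equiv_of_countable
  refine ⟨fun b => U ∩ Q (σ b), fun b => hU.inter (hQ _), fun b => (σ b).2, fun b => ⟨c (σ b), ?_⟩,
    fun a b hab => ?_, (σ.surjective.iUnion_comp fun n : J => U ∩ Q n).trans hJ_cover⟩
  · exact inter_subset_right.trans <| (hc _).trans <| eball_subset_eball (min_le_left _ _)
  · exact (hQdisj (Subtype.val_injective.ne (σ.injective.ne hab))).mono inter_subset_right
      inter_subset_right

/-- A Lusin scheme on `X` all of whose members are clopen and nonempty: a tree of sets indexed by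
finite sequences in `β`, in which `X` is the root, every set is partitioned by its children and
diameters vanish along branches. As in `CantorScheme`, sequences are lists whose head is the last
entry. It identifies a complete space `X` with the space `ℕ → β` of branches. -/
structure IsClopenLusinScheme [PseudoMetricSpace X] (A : List β → Set X) : Prop where
  isClopen : ∀ l, IsClopen (A l)
  nonempty : ∀ l, (A l).Nonempty
  nil_eq_univ : A [] = Set.univ
  iUnion_cons : ∀ l, ⋃ b, A (b :: l) = A l
  disjoint : CantorScheme.Disjoint A
  vanishingDiam : CantorScheme.VanishingDiam A

theorem exists_isClopenLusinScheme [PseudoMetricSpace X] [CompleteSpace X]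
    [SecondCountableTopology X] [Nonempty X] (hX : IsTopologicalBasis {U : Set X | IsClopen U})
    (hXc : ∀ K : Set X, IsCompact K → interior K = ∅) (β : Type*) [Countable β] [Infinite β] :
    ∃ A : List β → Set X, IsClopenLusinScheme A := by
  have hsplit (n : ℕ) (U : {U : Set X // IsClopen U ∧ U.Nonempty}) :
      ∃ P : β → {U : Set X // IsClopen U ∧ U.Nonempty},
        (∀ b, ∃ x, (P b : Set X) ⊆ eball x (n : ℝ≥0∞)⁻¹) ∧
          (Pairwise fun a b => Disjoint (P a : Set X) (P b)) ∧ ⋃ b, (P b : Set X) = U := by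
    have hUc : ¬IsCompact (U : Set X) := fun h =>
      U.2.2.ne_empty (U.2.1.isOpen.interior_eq ▸ hXc _ h)
    obtain ⟨P, hclopen, hne, hP⟩ := exists_isClopen_partition_subset_eball (β := β) hX U.2.1 hUc
      (ENNReal.inv_pos.2 (ENNReal.natCast_ne_top n))
    exact ⟨fun b => ⟨P b, hclopen b, hne b⟩, hP⟩
  choose P hball hdisj hunion using hsplit
  let A : List β → {U : Set X // IsClopen U ∧ U.Nonempty} :=
    List.rec ⟨Set.univ, isClopen_univ, univ_nonempty⟩ fun b l U => P l.length U b
  have hA_cons (b : β) (l : List β) : A (b :: l) = P l.length (A l) b := rfl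
  have hdiam (x : ℕ → β) (n : ℕ) : ediam (A (res x (n + 1))).1 ≤ 2 * (n : ℝ≥0∞)⁻¹ := by
    obtain ⟨y, hy⟩ := hball n (A (res x n)) (x n)
    calc ediam (A (res x (n + 1))).1 = ediam (P n (A (res x n)) (x n)).1 := by
          rw [res_succ, hA_cons, res_length]
      _ ≤ ediam (eball y (n : ℝ≥0∞)⁻¹) := ediam_mono hy
      _ ≤ 2 * (n : ℝ≥0∞)⁻¹ := ediam_eball_le
  have hlim : Tendsto (fun n : ℕ => 2 * (n : ℝ≥0∞)⁻¹) atTop (𝓝 0) := by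
    simpa using ENNReal.Tendsto.const_mul ENNReal.tendsto_inv_nat_nhds_zero
      (Or.inr ENNReal.ofNat_ne_top)
  exact ⟨fun l => (A l).1, {
    isClopen := fun l => (A l).2.1
    nonempty := fun l => (A l).2.2
    nil_eq_univ := rfl
    iUnion_cons := fun l => hunion l.length (A l)
    disjoint := fun l => hdisj l.length (A l)
    vanishingDiam := fun x => (tendsto_add_atTop_iff_nat 1).1 <|
      tendsto_of_tendsto_of_tendsto_of_le_of_le tendsto_const_nhds hlim (fun _ => bot_le)
        (hdiam x) }⟩

namespace IsClopenLusinScheme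

section PseudoMetricSpace

variable [PseudoMetricSpace X] {A : List β → Set X}

lemma antitone (hA : IsClopenLusinScheme A) : CantorScheme.Antitone A := fun l b =>
  (subset_iUnion (fun b => A (b :: l)) b).trans_eq (hA.iUnion_cons l)

lemma eq_of_mem_of_mem (hA : IsClopenLusinScheme A) {y : X} :
    ∀ {l l' : List β}, l.length = l'.length → y ∈ A l → y ∈ A l' → l = l'
  | [], [], _, _, _ => rfl
  | b :: l, b' :: l', hlen, hy, hy' => by
    obtain rfl := hA.eq_of_mem_of_mem (Nat.succ.inj hlen) (hA.antitone _ _ hy)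
      (hA.antitone _ _ hy')
    by_contra hne
    exact disjoint_left.1 (hA.disjoint l fun h => hne (congr_arg (· :: l) h)) hy hy'

lemma exists_forall_mem_res (hA : IsClopenLusinScheme A) (y : X) :
    ∃ x : ℕ → β, ∀ n, y ∈ A (res x n) := by
  have hnext (l : {l // y ∈ A l}) : ∃ b, y ∈ A (b :: l) :=
    mem_iUnion.1 ((hA.iUnion_cons l).symm ▸ l.2)
  choose next hnext using hnext
  let branch : ℕ → {l // y ∈ A l} :=
    Nat.rec ⟨[], hA.nil_eq_univ ▸ mem_univ y⟩ fun _ l => ⟨next l :: l, hnext l⟩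
  have hres (n : ℕ) : res (fun k => next (branch k)) n = (branch n).1 := by
    induction n with
    | zero => rfl
    | succ n ih => rw [res_succ, ih]
  exact ⟨_, fun n => (hres n).symm ▸ (branch n).2⟩

end PseudoMetricSpace

theorem nonempty_homeomorph [MetricSpace X] [CompleteSpace X] [TopologicalSpace β]
    [DiscreteTopology β] {A : List β → Set X} (hA : IsClopenLusinScheme A) :
    Nonempty ((ℕ → β) ≃ₜ X) := by
  have hdom (x : ℕ → β) : x ∈ (CantorScheme.inducedMap A).1 :=
    (hA.antitone.closureAntitone fun l => (hA.isClopen l).isClosed).map_of_vanishingDiam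
      hA.vanishingDiam hA.nonempty ▸ mem_univ x
  let f (x : ℕ → β) : X := (CantorScheme.inducedMap A).2 ⟨x, hdom x⟩
  have hf_mem (x : ℕ → β) (n : ℕ) : f x ∈ A (res x n) := CantorScheme.map_mem _ n
  have hf_cont : Continuous f :=
    hA.vanishingDiam.map_continuous.comp (continuous_id.subtype_mk hdom)
  have hf_inj : Injective f := fun x y hxy => congr_arg Subtype.val (hA.disjoint.map_injective hxy)
  have hf_surj : Surjective f := fun y => by
    obtain ⟨x, hx⟩ := hA.exists_forall_mem_res y
    refine ⟨x, eq_of_forall_dist_le fun ε hε => ?_⟩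
    obtain ⟨n, hn⟩ := hA.vanishingDiam.dist_lt ε hε x
    exact (hn _ (hf_mem x n) _ (hx n)).le
  have hf_image (x : ℕ → β) (n : ℕ) : f '' cylinder x n = A (res x n) := by
    rw [cylinder_eq_res]
    refine Subset.antisymm ?_ fun y hy => ?_
    · rintro _ ⟨z, hz, rfl⟩
      exact hz ▸ hf_mem z n
    · obtain ⟨z, rfl⟩ := hf_surj y
      exact ⟨z, hA.eq_of_mem_of_mem (by simp only [res_length]) (hf_mem z n) hy, rfl⟩
  have hf_open : IsOpenMap f := (isTopologicalBasis_cylinders _).isOpenMap_iff.2 <| by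
    rintro _ ⟨x, n, rfl⟩
    exact hf_image x n ▸ (hA.isClopen _).isOpen
  exact ⟨IsHomeomorph.homeomorph f ⟨hf_cont, hf_open, hf_inj, hf_surj⟩⟩

end IsClopenLusinScheme

theorem nonempty_homeomorph_of_isTopologicalBasis_isClopen [TopologicalSpace X]
    [PolishSpace X] [Nonempty X] (hX : IsTopologicalBasis {U : Set X | IsClopen U})
    (hXc : ∀ K : Set X, IsCompact K → interior K = ∅) (β : Type*) [Countable β] [Infinite β]
    [TopologicalSpace β] [DiscreteTopology β] : Nonempty ((ℕ → β) ≃ₜ X) := by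
  let := upgradeIsCompletelyMetrizable X
  obtain ⟨A, hA⟩ := exists_isClopenLusinScheme hX hXc β
  exact hA.nonempty_homeomorph

end BaireCharacterization

section Subtype

variable {X : Type*} [TopologicalSpace X] {s : Set X}

lemma polishSpace_of_isGδ [PolishSpace X] (hs : IsGδ s) : PolishSpace s := by
  obtain ⟨U, hU, rfl⟩ := isGδ_iff_eq_iInter_nat.1 hs
  have (n : ℕ) : PolishSpace (U n) := (hU n).polishSpace
  let diag (x : ⋂ n, U n) (n : ℕ) : U n := ⟨x, mem_iInter.1 x.2 n⟩
  have hdiag_cont : Continuous diag :=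
    continuous_pi fun n => continuous_subtype_val.subtype_mk _
  have hdiag_emb : IsEmbedding diag :=
    .of_comp hdiag_cont (continuous_subtype_val.comp (continuous_apply 0)) .subtypeVal
  have hdiag_range : range diag = ⋂ n, {y | (y n : X) = y 0} := by
    ext y
    simp only [mem_iInter, mem_ofPred_eq]
    refine ⟨?_, fun hy => ?_⟩
    · rintro ⟨x, rfl⟩ n
      rfl
    · exact ⟨⟨y 0, mem_iInter.2 fun n => hy n ▸ (y n).2⟩, funext fun n => Subtype.ext (hy n).symm⟩
  refine IsClosedEmbedding.polishSpace (f := diag) ⟨hdiag_emb, ?_⟩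
  rw [hdiag_range]
  exact isClosed_iInter fun n => isClosed_eq (continuous_subtype_val.comp (continuous_apply n))
    (continuous_subtype_val.comp (continuous_apply 0))

lemma interior_eq_empty_of_isCompact_of_dense_compl [T2Space X] (hs : Dense s) (hs' : Dense sᶜ)
    {K : Set s} (hK : IsCompact K) : interior K = ∅ :=
  hs.isDenseInducing_val.interior_compact_eq_empty (by rwa [Subtype.range_coe]) hK

lemma isTopologicalBasis_isClopen_of_dense_compl [LinearOrder X] [OrderTopology X]
    [DenselyOrdered X] [NoMinOrder X] [NoMaxOrder X] (hs : Dense sᶜ) :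
    IsTopologicalBasis {U : Set s | IsClopen U} := by
  refine isTopologicalBasis_of_isOpen_of_nhds (fun U hU => hU.isOpen) fun x U hx hU => ?_
  obtain ⟨V, hV, rfl⟩ := isOpen_induced_iff.1 hU
  obtain ⟨a, b, ⟨hax, hxb⟩, hab⟩ := mem_nhds_iff_exists_Ioo_subset.1 (hV.mem_nhds hx)
  obtain ⟨p, hp, hap, hpx⟩ := hs.exists_between hax
  obtain ⟨q, hq, hxq, hqb⟩ := hs.exists_between hxb
  have hclosed : Subtype.val ⁻¹' Ioo p q = (Subtype.val ⁻¹' Icc p q : Set s) := by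
    ext y
    have hpy : p ≠ y := fun h => hp (h ▸ y.2)
    have hyq : (y : X) ≠ q := fun h => hq (h ▸ y.2)
    simp only [mem_preimage, mem_Ioo, mem_Icc, hpy.le_iff_lt, hyq.le_iff_lt]
  refine ⟨Subtype.val ⁻¹' Ioo p q, ⟨?_, isOpen_Ioo.preimage continuous_subtype_val⟩, ⟨hpx, hxq⟩,
    preimage_mono ((Ioo_subset_Ioo hap.le hqb.le).trans hab)⟩
  rw [hclosed]
  exact isClosed_Icc.preimage continuous_subtype_val

end Subtype

section Irrational

lemma compl_setOf_irrational : {x : ℝ | Irrational x}ᶜ = range ((↑) : ℚ → ℝ) := compl_compl _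

lemma dense_compl_setOf_irrational : Dense {x : ℝ | Irrational x}ᶜ :=
  compl_setOf_irrational ▸ Rat.denseRange_cast

instance : PolishSpace {x : ℝ // Irrational x} := polishSpace_of_isGδ IsGδ.setOfPred_irrational

instance : Uncountable {x : ℝ // Irrational x} := by
  rw [← not_countable_iff]
  intro h
  have hunion : ({x : ℝ | Irrational x} ∪ {x : ℝ | Irrational x}ᶜ).Countable :=
    (countable_coe_iff.1 h).union (compl_setOf_irrational ▸ countable_range _)
  exact not_countable_real (union_compl_self {x : ℝ | Irrational x} ▸ hunion)

theorem nonempty_homeomorph_irrational (β : Type*) [Countable β] [Infinite β]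
    [TopologicalSpace β] [DiscreteTopology β] : Nonempty ((ℕ → β) ≃ₜ {x : ℝ // Irrational x}) := by
  have hbasis : IsTopologicalBasis {U : Set {x : ℝ // Irrational x} | IsClopen U} :=
    isTopologicalBasis_isClopen_of_dense_compl dense_compl_setOf_irrational
  have hcompact (K : Set {x : ℝ // Irrational x}) : IsCompact K → interior K = ∅ :=
    interior_eq_empty_of_isCompact_of_dense_compl dense_irrational dense_compl_setOf_irrational
  exact nonempty_homeomorph_of_isTopologicalBasis_isClopen hbasis hcompact β

end Irrational

theorem baire_space_partition_into_kappa_homeomorphic_bernstein_sets_general {X V : Type u}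
    [TopologicalSpace X] [PolishSpace X] [Uncountable X] [TopologicalSpace V] [AddCommGroup V]
    [SeparatelyContinuousAdd V] [Module ℚ V] (e : X ≃ₜ V) (κ : Cardinal.{u}) (h2 : 2 ≤ κ)
    (hc : κ ≤ 𝔠) :
    ∃ Part : Set (Set X), #Part = κ ∧ Part.PairwiseDisjoint id ∧ ⋃₀ Part = Set.univ ∧
      (∀ B ∈ Part, IsBernstein B) ∧ ∀ A ∈ Part, ∀ B ∈ Part, Nonempty (A ≃ₜ B) := by
  induction κ using Cardinal.inductionOn with | _ T
  have : Nontrivial T := one_lt_iff_nontrivial.1 (Cardinal.one_lt_two.trans_le h2)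
  obtain ⟨_⟩ := nonempty_commRing (α := T)
  obtain ⟨g, hg_image, hg_add⟩ := exists_equivariant_map_forall_perfect_image_eq_univ e hc
  have hg_cantor (C : Set X) (hC : IsCantorSet C) : g '' C = Set.univ := hg_image C hC.2.2.2 hC.1
  have hg_surj : Surjective g := fun t => by
    obtain ⟨x⟩ : Nonempty X := inferInstance
    obtain ⟨h, hh⟩ := hg_add (t - g x)
    exact ⟨h x, (hh x).trans (add_sub_cancel _ _)⟩
  refine ⟨range fun t => g ⁻¹' {t}, mk_range_eq _ ?_, ?_, ?_, ?_, ?_⟩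
  · exact hg_surj.preimage_injective.comp singleton_injective
  · rintro _ ⟨s, rfl⟩ _ ⟨t, rfl⟩ hst
    exact disjoint_singleton.2 (fun h => hst (by rw [h])) |>.preimage g
  · rw [sUnion_range, ← preimage_iUnion, iUnion_of_singleton, preimage_univ]
  · rintro _ ⟨t, rfl⟩
    exact isBernstein_fiber hg_cantor t
  · rintro _ ⟨s, rfl⟩ _ ⟨t, rfl⟩
    exact nonempty_homeomorph_fiber hg_add s t

theorem baire_space_partition_into_kappa_homeomorphic_bernstein_sets
    (κ : Cardinal) (h2 : 2 ≤ κ) (hc : κ ≤ Cardinal.continuum) :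
    ∃ Part : Set (Set {x : ℝ // Irrational x}),
      Cardinal.mk Part = κ ∧ Part.PairwiseDisjoint id ∧ ⋃₀ Part = Set.univ ∧
      (∀ B ∈ Part, IsBernstein B) ∧
      ∀ A ∈ Part, ∀ B ∈ Part, Nonempty (↥A ≃ₜ ↥B) := by
  let : TopologicalSpace (ℕ →₀ ℚ) := ⊥
  have : DiscreteTopology (ℕ →₀ ℚ) := ⟨rfl⟩
  obtain ⟨e⟩ := nonempty_homeomorph_irrational (ℕ →₀ ℚ)
  exact baire_space_partition_into_kappa_homeomorphic_bernstein_sets_general e.symm κ h2 hc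
end
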